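/- arXiv:1405.6196 — 2 statements merged into one kernel-verified Lean document; each statement's English description precedes it below -/
import Mathlib

section
/- If W + c₁ < w, then Γ₁(1, 1) > 0. -/
open Real ENNReal

noncomputable def f₁ (w θ η W c₁ c₂ τ b₀ ε₀ : ℝ) : ℝ :=
  b₀ + W * ε₀ / (w + θ) * (Real.exp ((w + θ) * τ) - 1) +
    (c₁ - c₂) / w * (Real.exp (w * τ) - 1) +
    c₂ / (w + η) * (Real.exp ((w + η) * τ) - 1)

noncomputable def f₂ (w τ : ℝ) : ℝ := Real.exp (w * τ)

/-- The comparison function `b̃` of Lemma 1. -/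
noncomputable def btilde (w θ η W c₁ c₂ τ b₀ ε₀ : ℝ) : ℝ :=
  f₁ w θ η W c₁ c₂ τ b₀ ε₀ / f₂ w τ

/-- `Γ₁(b₀, ε₀)`: the infimum in `[0, ∞]` of the set
`{τ ≥ 0 : b̃(τ, b₀, ε₀) = 1 and (∂/∂τ)b̃(τ, b₀, ε₀) ≥ 0}` (`∞` if the set is empty). -/
noncomputable def Γ₁ (w θ η W c₁ c₂ b₀ ε₀ : ℝ) : ℝ≥0∞ :=
  sInf {x : ℝ≥0∞ | ∃ τ : ℝ, 0 ≤ τ ∧ x = ENNReal.ofReal τ ∧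
    btilde w θ η W c₁ c₂ τ b₀ ε₀ = 1 ∧
    0 ≤ deriv (fun s => btilde w θ η W c₁ c₂ s b₀ ε₀) τ}

/-!
The admissible times `τ` form a closed subset of `[0, ∞)`, because `b̃` is continuously
differentiable in `τ`; hence `Γ₁` vanishes exactly when `τ = 0` is itself admissible. Since `b̃`
solves `b̃' = W ε₀ e^{θτ} + c₁ - c₂ + c₂ e^{ητ} - w b̃` with `b̃(0) = b₀`, this means that `b₀ = 1`
and `W ε₀ + c₁ - w ≥ 0`.
-/

theorem sInf_image_ofReal_pos_iff {S : Set ℝ} (hS : IsClosed S) (hS₀ : S ⊆ Set.Ici 0) :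
    0 < sInf (ENNReal.ofReal '' S) ↔ 0 ∉ S := by
  refine ⟨fun hpos hmem => hpos.not_ge (sInf_le ⟨0, hmem, ofReal_zero⟩), fun hnotMem => ?_⟩
  obtain ⟨δ, hδ, hball⟩ := Metric.isOpen_iff.mp hS.isOpen_compl 0 hnotMem
  refine (ofReal_pos.mpr hδ).trans_le (le_sInf ?_)
  rintro _ ⟨τ, hτ, rfl⟩
  refine ofReal_le_ofReal (not_lt.mp fun hlt => hball ?_ hτ)
  rwa [Metric.mem_ball, dist_0_eq_abs, abs_of_nonneg (hS₀ hτ)]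

theorem hasDerivAt_div_mul_exp_sub_one {a : ℝ} (ha : a ≠ 0) (C τ : ℝ) :
    HasDerivAt (fun s => C / a * (exp (a * s) - 1)) (C * exp (a * τ)) τ := by
  refine ((((hasDerivAt_id' τ).const_mul a).exp.sub_const 1).const_mul (C / a)).congr_deriv ?_
  field_simp

section ComparisonFunction

variable {w θ η : ℝ} (W c₁ c₂ b₀ ε₀ : ℝ)

theorem hasDerivAt_f₁ (hw : w ≠ 0) (hwθ : w + θ ≠ 0) (hwη : w + η ≠ 0) (τ : ℝ) :
    HasDerivAt (fun s => f₁ w θ η W c₁ c₂ s b₀ ε₀)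
      (W * ε₀ * exp ((w + θ) * τ) + (c₁ - c₂) * exp (w * τ) + c₂ * exp ((w + η) * τ)) τ :=
  (((hasDerivAt_div_mul_exp_sub_one hwθ (W * ε₀) τ).const_add b₀).add
    (hasDerivAt_div_mul_exp_sub_one hw (c₁ - c₂) τ)).add
    (hasDerivAt_div_mul_exp_sub_one hwη c₂ τ)

theorem hasDerivAt_btilde (hw : w ≠ 0) (hwθ : w + θ ≠ 0) (hwη : w + η ≠ 0) (τ : ℝ) :
    HasDerivAt (fun s => btilde w θ η W c₁ c₂ s b₀ ε₀)
      (W * ε₀ * exp (θ * τ) + (c₁ - c₂) + c₂ * exp (η * τ)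
        - w * btilde w θ η W c₁ c₂ τ b₀ ε₀) τ := by
  have hf₂ : HasDerivAt (f₂ w) (exp (w * τ) * (w * 1)) τ :=
    ((hasDerivAt_id' τ).const_mul w).exp
  refine ((hasDerivAt_f₁ W c₁ c₂ b₀ ε₀ hw hwθ hwη τ).div hf₂ (exp_ne_zero _)).congr_deriv ?_
  simp only [btilde, f₂, add_mul, exp_add]
  field_simp

variable (w θ η)

theorem btilde_zero : btilde w θ η W c₁ c₂ 0 b₀ ε₀ = b₀ := by
  simp [btilde, f₁, f₂]

theorem contDiff_btilde {n : WithTop ℕ∞} :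
    ContDiff ℝ n fun τ => btilde w θ η W c₁ c₂ τ b₀ ε₀ := by
  unfold btilde f₁ f₂
  exact ContDiff.div (by fun_prop) (by fun_prop) fun τ => exp_ne_zero _

/-- The set of times `τ ≥ 0` at which `b̃(·, b₀, ε₀)` takes the value `1` with nonnegative
derivative; its infimum in `[0, ∞]` is `Γ₁(b₀, ε₀)`. -/
def nondecreasingHits : Set ℝ :=
  {τ | 0 ≤ τ ∧ btilde w θ η W c₁ c₂ τ b₀ ε₀ = 1 ∧
    0 ≤ deriv (fun s => btilde w θ η W c₁ c₂ s b₀ ε₀) τ}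

theorem Γ₁_eq_sInf_image :
    Γ₁ w θ η W c₁ c₂ b₀ ε₀ =
      sInf (ENNReal.ofReal '' nondecreasingHits w θ η W c₁ c₂ b₀ ε₀) := by
  unfold Γ₁ nondecreasingHits
  congr 1
  ext x
  grind

theorem isClosed_nondecreasingHits : IsClosed (nondecreasingHits w θ η W c₁ c₂ b₀ ε₀) := by
  have hsmooth : ContDiff ℝ 1 _ := contDiff_btilde w θ η W c₁ c₂ b₀ ε₀
  exact isClosed_Ici.inter ((isClosed_eq hsmooth.continuous continuous_const).inter
    (isClosed_le continuous_const (hsmooth.continuous_deriv le_rfl)))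

theorem Γ₁_pos_iff_zero_notMem :
    0 < Γ₁ w θ η W c₁ c₂ b₀ ε₀ ↔ 0 ∉ nondecreasingHits w θ η W c₁ c₂ b₀ ε₀ := by
  rw [Γ₁_eq_sInf_image]
  exact sInf_image_ofReal_pos_iff (isClosed_nondecreasingHits w θ η W c₁ c₂ b₀ ε₀)
    fun _ hτ => hτ.1

variable {w θ η}

theorem deriv_btilde_zero (hw : w ≠ 0) (hwθ : w + θ ≠ 0) (hwη : w + η ≠ 0) :
    deriv (fun s => btilde w θ η W c₁ c₂ s b₀ ε₀) 0 = W * ε₀ + c₁ - w * b₀ := by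
  rw [(hasDerivAt_btilde W c₁ c₂ b₀ ε₀ hw hwθ hwη 0).deriv, btilde_zero]
  simp only [mul_zero, exp_zero]
  ring

theorem zero_mem_nondecreasingHits_iff (hw : w ≠ 0) (hwθ : w + θ ≠ 0) (hwη : w + η ≠ 0) :
    0 ∈ nondecreasingHits w θ η W c₁ c₂ b₀ ε₀ ↔ b₀ = 1 ∧ w ≤ W * ε₀ + c₁ := by
  simp only [nondecreasingHits, Set.mem_ofPred_eq, le_refl, true_and, btilde_zero,
    deriv_btilde_zero W c₁ c₂ b₀ ε₀ hw hwθ hwη, sub_nonneg]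
  exact and_congr_right fun hb₀ => by rw [hb₀, mul_one]

end ComparisonFunction

theorem stmt_7_general {w θ η : ℝ} (W c₁ c₂ b₀ ε₀ : ℝ)
    (hw : w ≠ 0) (hwθ : w + θ ≠ 0) (hwη : w + η ≠ 0) :
    0 < Γ₁ w θ η W c₁ c₂ b₀ ε₀ ↔ (b₀ = 1 → W * ε₀ + c₁ < w) := by
  rw [Γ₁_pos_iff_zero_notMem, zero_mem_nondecreasingHits_iff W c₁ c₂ b₀ ε₀ hw hwθ hwη,
    not_and, not_le]

/-- Lemma 2(i): `Γ₁(1,1) > 0` under assumption (13). -/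
theorem stmt_7 (w θ η W c₁ c₂ : ℝ) (hw : 0 < w) (hθ : 0 < θ) (hη : 0 < η)
    (hW : 0 < W) (hc₁ : 0 ≤ c₁) (hc₂ : 0 ≤ c₂) (hWc : W + c₁ < w) :
    0 < Γ₁ w θ η W c₁ c₂ 1 1 :=
  (stmt_7_general W c₁ c₂ 1 1 hw.ne' (by positivity) (by positivity)).mpr
    fun _ => by rwa [mul_one]
end

section
/- For all τ ≥ 0 and all b₀, ε₀ ∈ ℝ, b̃(τ, b₀, ε₀) − b̃(τ, 1, 1) = e^{−wτ}·[(b₀ − 1) + (W(ε₀ − 1)/(w+θ))·(e^{(w+θ)τ} − 1)]. Consequently, if T > 0, b₀ ≤ 1 and ε₀ ≤ ρ_T(b₀), then b̃(τ, b₀, ε₀) ≤ b̃(τ, 1, 1) for all τ ∈ [0, T]. -/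
/-!
The terms in `c₁` and `c₂` cancel in a difference of two values of `b̃(τ, ·, ·)`, so comparing
`b̃(τ, b, ε)` with `b̃(τ, b', ε')` amounts to comparing `W (ε - ε') g(τ)` with `b' - b`, where
`g(τ) = (e^{(w+θ)τ} - 1) / (w+θ)`. The condition `ε ≤ ρ_T(b)` is exactly
`b̃(T, b, ε) ≤ b̃(T, 1, 1)`. Since `g` increases from `g(0) = 0`, whatever the sign of `w + θ`,
such a comparison at time `T` together with the comparison `b ≤ 1` at time `0` extends
to all of `[0, T]`.
-/

open Real

/-- The threshold function `ρ_T` of Lemma 2(iii). -/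
noncomputable def ρ (w θ W T y : ℝ) : ℝ :=
  (w + θ) * (1 - y) / (W * (Real.exp ((w + θ) * T) - 1)) + 1

theorem mul_le_of_mul_le_of_nonneg_of_le {R : Type*} [Ring R] [LinearOrder R] [IsOrderedRing R]
    {s x y c : R} (hx : 0 ≤ x) (hxy : x ≤ y) (hc : 0 ≤ c) (hy : s * y ≤ c) : s * x ≤ c := by
  rcases le_total 0 s with hs | hs
  · exact (mul_le_mul_of_nonneg_left hxy hs).trans hy
  · exact (mul_nonpos_of_nonpos_of_nonneg hs hx).trans hc

theorem strictMono_exp_mul_sub_one_div {k : ℝ} (hk : k ≠ 0) :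
    StrictMono fun t : ℝ => (exp (k * t) - 1) / k := by
  intro s t hst
  rcases hk.lt_or_gt with hneg | hpos
  · have hexp : exp (k * t) < exp (k * s) := exp_lt_exp.mpr (mul_lt_mul_of_neg_left hst hneg)
    exact div_lt_div_of_neg_of_lt hneg (sub_lt_sub_right hexp 1)
  · have hexp : exp (k * s) < exp (k * t) := exp_lt_exp.mpr (mul_lt_mul_of_pos_left hst hpos)
    exact div_lt_div_of_pos_right (sub_lt_sub_right hexp 1) hpos

theorem exp_mul_sub_one_div_pos {k t : ℝ} (hk : k ≠ 0) (ht : 0 < t) :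
    0 < (exp (k * t) - 1) / k := by
  simpa using strictMono_exp_mul_sub_one_div hk ht

theorem btilde_sub_btilde (w θ η W c₁ c₂ τ b ε b' ε' : ℝ) :
    btilde w θ η W c₁ c₂ τ b ε - btilde w θ η W c₁ c₂ τ b' ε' =
      exp (-w * τ) * ((b - b') + W * (ε - ε') / (w + θ) * (exp ((w + θ) * τ) - 1)) := by
  rw [neg_mul, exp_neg]
  unfold btilde f₁ f₂
  ring

section Comparison

variable {w θ W T τ b b' ε ε' : ℝ} (η c₁ c₂ : ℝ)

theorem btilde_le_btilde_iff :
    btilde w θ η W c₁ c₂ τ b ε ≤ btilde w θ η W c₁ c₂ τ b' ε' ↔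
      W * (ε - ε') * ((exp ((w + θ) * τ) - 1) / (w + θ)) ≤ b' - b := by
  rw [← sub_nonneg, ← neg_sub, btilde_sub_btilde, ← mul_neg, mul_nonneg_iff_of_pos_left (exp_pos _),
    neg_add', neg_sub, sub_nonneg, div_mul_eq_mul_div, mul_div_assoc]

theorem le_ρ_iff_btilde_le_btilde (hwθ : w + θ ≠ 0) (hW : 0 < W) (hT : 0 < T) :
    ε ≤ ρ w θ W T b ↔ btilde w θ η W c₁ c₂ T b ε ≤ btilde w θ η W c₁ c₂ T 1 1 := by
  have hgrowth := exp_mul_sub_one_div_pos hwθ hT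
  have hρ : ρ w θ W T b = (1 - b) / (W * ((exp ((w + θ) * T) - 1) / (w + θ))) + 1 := by
    rw [ρ, ← mul_div_assoc, div_div_eq_mul_div, mul_comm (1 - b)]
  rw [btilde_le_btilde_iff, hρ, ← sub_le_iff_le_add, le_div_iff₀ (mul_pos hW hgrowth),
    mul_left_comm, mul_assoc]

theorem btilde_le_btilde_of_mem_Icc (hwθ : w + θ ≠ 0) (hb : b ≤ b') (hτ : τ ∈ Set.Icc 0 T)
    (hT : btilde w θ η W c₁ c₂ T b ε ≤ btilde w θ η W c₁ c₂ T b' ε') :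
    btilde w θ η W c₁ c₂ τ b ε ≤ btilde w θ η W c₁ c₂ τ b' ε' := by
  rw [btilde_le_btilde_iff] at hT ⊢
  have hmono := (strictMono_exp_mul_sub_one_div hwθ).monotone
  have hnonneg : 0 ≤ (exp ((w + θ) * τ) - 1) / (w + θ) := by simpa using hmono hτ.1
  exact mul_le_of_mul_le_of_nonneg_of_le hnonneg (hmono hτ.2) (sub_nonneg.mpr hb) hT

end Comparison

theorem stmt_9_general (w θ η W c₁ c₂ : ℝ) (hwθ : w + θ ≠ 0) (hW : 0 < W) :
    (∀ τ b₀ ε₀ : ℝ,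
      btilde w θ η W c₁ c₂ τ b₀ ε₀ - btilde w θ η W c₁ c₂ τ 1 1 =
        exp (-w * τ) *
          ((b₀ - 1) + W * (ε₀ - 1) / (w + θ) * (exp ((w + θ) * τ) - 1))) ∧
    ∀ T : ℝ, 0 < T → ∀ b₀ ε₀ : ℝ, b₀ ≤ 1 → ε₀ ≤ ρ w θ W T b₀ →
      ∀ τ ∈ Set.Icc (0 : ℝ) T,
        btilde w θ η W c₁ c₂ τ b₀ ε₀ ≤ btilde w θ η W c₁ c₂ τ 1 1 := by
  refine ⟨fun τ b₀ ε₀ => btilde_sub_btilde w θ η W c₁ c₂ τ b₀ ε₀ 1 1, ?_⟩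
  intro T hT b₀ ε₀ hb hε τ hτ
  have hle_at_T := (le_ρ_iff_btilde_le_btilde η c₁ c₂ hwθ hW hT).mp hε
  exact btilde_le_btilde_of_mem_Icc η c₁ c₂ hwθ hb hτ hle_at_T

/-- Identity and inequality (46) used in the proof of Lemma 2(iii). -/
theorem stmt_9 (w θ η W c₁ c₂ : ℝ) (hw : 0 < w) (hθ : 0 < θ) (hη : 0 < η)
    (hW : 0 < W) (hc₁ : 0 ≤ c₁) (hc₂ : 0 ≤ c₂) :
    (∀ τ : ℝ, 0 ≤ τ → ∀ b₀ ε₀ : ℝ,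
      btilde w θ η W c₁ c₂ τ b₀ ε₀ - btilde w θ η W c₁ c₂ τ 1 1 =
        Real.exp (-w * τ) *
          ((b₀ - 1) + W * (ε₀ - 1) / (w + θ) * (Real.exp ((w + θ) * τ) - 1))) ∧
    ∀ T : ℝ, 0 < T → ∀ b₀ ε₀ : ℝ, b₀ ≤ 1 → ε₀ ≤ ρ w θ W T b₀ →
      ∀ τ ∈ Set.Icc (0 : ℝ) T,
        btilde w θ η W c₁ c₂ τ b₀ ε₀ ≤ btilde w θ η W c₁ c₂ τ 1 1 := by
  obtain ⟨hsub, hle⟩ := stmt_9_general w θ η W c₁ c₂ (add_pos hw hθ).ne' hW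
  exact ⟨fun τ _ => hsub τ, hle⟩
end
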